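/- Let X be a Tychonoff space with iw(X) = ℵ₀. The bitopological function space (C(X), τ_k, τ_p) satisfies S_fin(𝒟^k, 𝒟^p) — i.e., for every sequence (D_n) of dense subsets of C_k(X) one can choose finite F_n ⊆ D_n such that ⋃_n F_n is dense in C_p(X) — if and only if X satisfies S_fin(𝒦, Ω), i.e., for every sequence (𝒰_n) of open k-covers of X one can choose finite 𝒱_n ⊆ 𝒰_n such that ⋃_n 𝒱_n is an ω-cover of X. -/

import Mathlib

open Set Filter Topology TopologicalSpace

universe u

/-- The topology of pointwise convergence on `C(X, ℝ)`. -/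
def pointwiseTopology (X : Type u) [TopologicalSpace X] : TopologicalSpace C(X, ℝ) :=
  TopologicalSpace.induced (fun f : C(X, ℝ) => (f : X → ℝ)) Pi.topologicalSpace

/-- `𝒰` is an (open) k-cover of `X`: a nontrivial open cover such that every compact
subset of `X` is contained in some member of `𝒰`. -/
def IsKCover {X : Type u} [TopologicalSpace X] (𝒰 : Set (Set X)) : Prop :=
  (∀ U ∈ 𝒰, IsOpen U) ∧ ⋃₀ 𝒰 = Set.univ ∧ Set.univ ∉ 𝒰 ∧
    ∀ K : Set X, IsCompact K → ∃ U ∈ 𝒰, K ⊆ U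

/-- `𝒰` is an (open) ω-cover of `X`: a nontrivial open cover such that every finite
subset of `X` is contained in some member of `𝒰`. -/
def IsOmegaCover {X : Type u} [TopologicalSpace X] (𝒰 : Set (Set X)) : Prop :=
  (∀ U ∈ 𝒰, IsOpen U) ∧ ⋃₀ 𝒰 = Set.univ ∧ Set.univ ∉ 𝒰 ∧
    ∀ F : Set X, F.Finite → ∃ U ∈ 𝒰, F ⊆ U

/-- `𝒰` is an (open) γ-cover of `X`: an infinite open cover such that for every finite
subset `F` of `X`, all but finitely many members of `𝒰` contain `F`. -/
def IsGammaCover {X : Type u} [TopologicalSpace X] (𝒰 : Set (Set X)) : Prop :=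
  (∀ U ∈ 𝒰, IsOpen U) ∧ ⋃₀ 𝒰 = Set.univ ∧ 𝒰.Infinite ∧
    ∀ F : Set X, F.Finite → {U ∈ 𝒰 | ¬ F ⊆ U}.Finite

/-- `iw(X) = ℵ₀`: there is a second-countable Tychonoff space `Y` and a continuous
bijection (one-to-one and onto map) from `X` to `Y`. -/
def CountableIWeight (X : Type u) [TopologicalSpace X] : Prop :=
  ∃ (Y : Type u) (_ : TopologicalSpace Y), SecondCountableTopology Y ∧ T35Space Y ∧
    ∃ f : X → Y, Continuous f ∧ Function.Bijective f

/-- The selection principle `S₁(𝒜, ℬ)`. -/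
def S1sel {α : Type u} (𝒜 ℬ : Set (Set α)) : Prop :=
  ∀ A : ℕ → Set α, (∀ n, A n ∈ 𝒜) →
    ∃ b : ℕ → α, (∀ n, b n ∈ A n) ∧ Set.range b ∈ ℬ

/-- The selection principle `S_fin(𝒜, ℬ)`. -/
def SfinSel {α : Type u} (𝒜 ℬ : Set (Set α)) : Prop :=
  ∀ A : ℕ → Set α, (∀ n, A n ∈ 𝒜) →
    ∃ B : ℕ → Set α, (∀ n, (B n).Finite ∧ B n ⊆ A n) ∧ (⋃ n, B n) ∈ ℬ

/-- A strategy for player ONE in the game `G₁(𝒜, ℬ)` (a function from finite sequences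
of TWO's moves to sets) is winning if it always plays members of `𝒜` and ONE wins every
play in which he follows it. -/
def IsWinningStrategyOneG1 {α : Type u} (𝒜 ℬ : Set (Set α)) (σ : List α → Set α) : Prop :=
  (∀ h : List α, σ h ∈ 𝒜) ∧
    ∀ b : ℕ → α, (∀ n, b n ∈ σ (List.ofFn fun i : Fin n => b i)) → Set.range b ∉ ℬ

/-- A strategy for player ONE in the game `G_fin(𝒜, ℬ)` (a function from finite sequences
of TWO's moves, which are finite subsets, to sets) is winning if it always plays members of
`𝒜` and ONE wins every play in which he follows it. -/
def IsWinningStrategyOneGfin {α : Type u} (𝒜 ℬ : Set (Set α)) (σ : List (Set α) → Set α) :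
    Prop :=
  (∀ h : List (Set α), σ h ∈ 𝒜) ∧
    ∀ B : ℕ → Set α,
      (∀ n, (B n).Finite ∧ B n ⊆ σ (List.ofFn fun i : Fin n => B i)) → (⋃ n, B n) ∉ ℬ

/-- `A ⊆ C(X, ℝ)` is sequentially dense in `C_p(X)`: every continuous function is the
pointwise limit of a sequence from `A`. -/
def SeqDenseP (X : Type u) [TopologicalSpace X] (A : Set C(X, ℝ)) : Prop :=
  ∀ g : C(X, ℝ), ∃ s : ℕ → C(X, ℝ), (∀ n, s n ∈ A) ∧
    Filter.Tendsto s Filter.atTop (@nhds _ (pointwiseTopology X) g)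

/-- The family `Ω^k_0` of subsets of `C(X, ℝ)` not containing `0` but having `0` in their
closure with respect to the compact-open topology. -/
def OmegaKZero (X : Type u) [TopologicalSpace X] (A : Set C(X, ℝ)) : Prop :=
  (0 : C(X, ℝ)) ∉ A ∧ (0 : C(X, ℝ)) ∈ closure A

/-- The family `Ω^p_0` of subsets of `C(X, ℝ)` not containing `0` but having `0` in their
closure with respect to the topology of pointwise convergence. -/
def OmegaPZero (X : Type u) [TopologicalSpace X] (A : Set C(X, ℝ)) : Prop :=
  (0 : C(X, ℝ)) ∉ A ∧ (0 : C(X, ℝ)) ∈ @closure _ (pointwiseTopology X) A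

/-- The family `Γ^p_0` of infinite subsets `A` of `C(X, ℝ)` with `0 ∉ A` such that every
neighborhood of `0` in the topology of pointwise convergence contains all but finitely
many elements of `A`. -/
def GammaPZero (X : Type u) [TopologicalSpace X] (A : Set C(X, ℝ)) : Prop :=
  A.Infinite ∧ (0 : C(X, ℝ)) ∉ A ∧
    ∀ N ∈ @nhds _ (pointwiseTopology X) (0 : C(X, ℝ)), {f ∈ A | f ∉ N}.Finite

/-!
Covers in which `X` itself may occur satisfy the same selection principle: once some `𝒰 n` contains
`X`, choosing it settles the matter. So nontriviality can be ignored throughout.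

Given a k-cover `𝒰`, the functions equal to `1` outside some member of `𝒰` are dense in `C_k(X)`,
and if one of them is `1`-close to `0` on a finite set `F`, the corresponding member contains `F`.

Conversely, `g` lies in the closure of `A` for the compact-open (pointwise) topology exactly when,
for each `ε > 0`, the sets `{x | |f x - g x| < ε}` with `f ∈ A` swallow all compact (finite) sets.
Hence `S_fin(𝒦, Ω)` selects, for each fixed `ε`, finite subsets whose union comes `ε`-close to `g`
on every finite set. Countably many selections can be performed at once by splitting the sequence of
moves, which takes care first of all `ε = 1 / (m + 1)` and then of all `g` in a countable dense
subset of `C_p(X)`. Such a subset exists because `X` injects continuously into the Hilbert cube `Q`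
and `C_k(Q)` is separable.
-/

open scoped unitInterval

section SelectionPrinciples

universe v

variable {α : Type u} {𝒜 𝒜' ℬ ℬ' : Set (Set α)}

lemma SfinSel.mono (h𝒜 : 𝒜' ⊆ 𝒜) (hℬ : ℬ ⊆ ℬ') (h : SfinSel 𝒜 ℬ) : SfinSel 𝒜' ℬ' :=
  fun A hA => (h A fun n => h𝒜 (hA n)).imp fun _ hB => ⟨hB.1, hℬ hB.2⟩

lemma SfinSel.iInter {ι : Type*} [Countable ι] {ℬ : ι → Set (Set α)}
    (hℬ : ∀ i, IsUpperSet (ℬ i)) (h : ∀ i, SfinSel 𝒜 (ℬ i)) : SfinSel 𝒜 (⋂ i, ℬ i) := by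
  intro A hA
  obtain ⟨e, he⟩ := exists_injective_nat (ι × ℕ)
  choose B hBA hBℬ using fun i => h i (fun n => A (e (i, n))) fun n => hA _
  refine ⟨fun k => ⋃ p ∈ e ⁻¹' {k}, B p.1 p.2, fun k => ⟨?_, ?_⟩, mem_iInter.2 fun i => ?_⟩
  · exact ((finite_singleton k).preimage he.injOn).biUnion fun p _ => (hBA p.1 p.2).1
  · rintro b hb
    obtain ⟨p, rfl, hbp⟩ := mem_iUnion₂.1 hb
    exact (hBA p.1 p.2).2 hbp
  · refine hℬ i (iUnion_subset fun n b hb => ?_) (hBℬ i)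
    exact mem_iUnion.2 ⟨e (i, n), mem_iUnion₂.2 ⟨(i, n), rfl, hb⟩⟩

lemma SfinSel.of_rel {β : Type v} {𝒞 𝒟 : Set (Set β)} (R : α → β → Prop) (h : SfinSel 𝒜 ℬ)
    (h𝒞 : ∀ C ∈ 𝒞, {a | ∃ c ∈ C, R a c} ∈ 𝒜)
    (h𝒟 : ∀ B ∈ ℬ, ∀ D, (∀ b ∈ B, ∃ d ∈ D, R b d) → D ∈ 𝒟) : SfinSel 𝒞 𝒟 := by
  intro C hC
  obtain ⟨B, hB, hBℬ⟩ := h _ fun n => h𝒞 (C n) (hC n)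
  choose c hcC hRc using fun n (b : B n) => (hB n).2 b.2
  have hfin n : Finite (B n) := (hB n).1
  refine ⟨fun n => range (c n), fun n => ⟨finite_range _, range_subset_iff.2 (hcC n)⟩,
    h𝒟 _ hBℬ _ fun b hb => ?_⟩
  obtain ⟨n, hn⟩ := mem_iUnion.1 hb
  exact ⟨c n ⟨b, hn⟩, mem_iUnion.2 ⟨n, mem_range_self _⟩, hRc n ⟨b, hn⟩⟩

lemma SfinSel.dense_of_forall_mem_closure [TopologicalSpace α] [SeparableSpace α]
    (h : ∀ z : α, SfinSel 𝒜 {B | z ∈ closure B}) : SfinSel 𝒜 {B | Dense B} := by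
  obtain ⟨S, hS, hSdense⟩ := exists_countable_dense α
  have : Countable S := hS
  have hupper (z : S) : IsUpperSet {B : Set α | (z : α) ∈ closure B} :=
    fun _ _ hle hz => closure_mono hle hz
  refine (SfinSel.iInter hupper fun z => h z).mono Subset.rfl fun B hB => ?_
  exact dense_closure.1 (hSdense.mono fun z hz => mem_iInter.1 hB ⟨z, hz⟩)

end SelectionPrinciples

section Covers

/-- Families of open sets having a member above each compact set. These are the open k-covers,
except that the trivial member `X` is allowed. -/
def openKFamilies (X : Type u) [TopologicalSpace X] : Set (Set (Set X)) :=
  {𝒰 | (∀ U ∈ 𝒰, IsOpen U) ∧ IsCofinalFor {K | IsCompact K} 𝒰}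

/-- Families of sets having a member above each finite set. In comparison with ω-covers, the
members need not be open and the trivial member `X` is allowed. -/
def omegaFamilies (X : Type u) : Set (Set (Set X)) :=
  {𝒰 | IsCofinalFor {F | F.Finite} 𝒰}

lemma isUpperSet_omegaFamilies (X : Type u) : IsUpperSet (omegaFamilies X) :=
  fun _ _ hle h => h.mono_right hle

lemma sUnion_eq_univ_of_isCofinalFor {X : Type*} {𝒦 𝒰 : Set (Set X)} (h𝒦 : ∀ x, {x} ∈ 𝒦)
    (h : IsCofinalFor 𝒦 𝒰) : ⋃₀ 𝒰 = univ := by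
  refine eq_univ_of_forall fun x => ?_
  obtain ⟨U, hU, hxU⟩ := h (h𝒦 x)
  exact ⟨U, hU, hxU rfl⟩

variable {X : Type u} [TopologicalSpace X] {𝒰 : Set (Set X)}

lemma isKCover_iff : IsKCover 𝒰 ↔ 𝒰 ∈ openKFamilies X ∧ univ ∉ 𝒰 :=
  ⟨fun h => ⟨⟨h.1, h.2.2.2⟩, h.2.2.1⟩, fun ⟨h, hu⟩ =>
    ⟨h.1, sUnion_eq_univ_of_isCofinalFor (fun _ => isCompact_singleton) h.2, hu, h.2⟩⟩

lemma isOmegaCover_iff :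
    IsOmegaCover 𝒰 ↔ (∀ U ∈ 𝒰, IsOpen U) ∧ 𝒰 ∈ omegaFamilies X ∧ univ ∉ 𝒰 :=
  ⟨fun h => ⟨h.1, h.2.2.2, h.2.2.1⟩, fun ⟨ho, h, hu⟩ =>
    ⟨ho, sUnion_eq_univ_of_isCofinalFor (fun x => finite_singleton x) h, hu, h⟩⟩

theorem sfinSel_isKCover_isOmegaCover_iff :
    SfinSel {𝒰 : Set (Set X) | IsKCover 𝒰} {𝒰 : Set (Set X) | IsOmegaCover 𝒰} ↔
      SfinSel (openKFamilies X) (omegaFamilies X) := by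
  constructor
  · intro h 𝒰 h𝒰
    by_cases huniv : ∃ n, univ ∈ 𝒰 n
    · obtain ⟨n, hn⟩ := huniv
      exact ⟨fun k => 𝒰 k ∩ {univ}, fun k => ⟨toFinite _, inter_subset_left⟩,
        fun F _ => ⟨univ, mem_iUnion.2 ⟨n, hn, rfl⟩, subset_univ F⟩⟩
    · push Not at huniv
      obtain ⟨𝒱, h𝒱, hω⟩ := h 𝒰 fun n => isKCover_iff.2 ⟨h𝒰 n, huniv n⟩
      exact ⟨𝒱, h𝒱, (isOmegaCover_iff.1 hω).2.1⟩
  · intro h 𝒰 h𝒰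
    obtain ⟨𝒱, h𝒱, hω⟩ := h 𝒰 fun n => (isKCover_iff.1 (h𝒰 n)).1
    have hmem : ∀ U ∈ ⋃ n, 𝒱 n, ∃ n, U ∈ 𝒰 n := fun U hU =>
      (mem_iUnion.1 hU).imp fun n hn => (h𝒱 n).2 hn
    refine ⟨𝒱, h𝒱, isOmegaCover_iff.2 ⟨fun U hU => ?_, hω, fun hU => ?_⟩⟩
    · obtain ⟨n, hn⟩ := hmem U hU
      exact (h𝒰 n).1 U hn
    · obtain ⟨n, hn⟩ := hmem univ hU
      exact (isKCover_iff.1 (h𝒰 n)).2 hn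

end Covers

section Closure

lemma nhds_pi_hasBasis_ball {ι : Type*} {E : ι → Type*} [∀ i, PseudoMetricSpace (E i)]
    (g : ∀ i, E i) :
    (𝓝 g).HasBasis (fun p : Set ι × ℝ => p.1.Finite ∧ 0 < p.2)
      fun p => p.1.pi fun i => Metric.ball (g i) p.2 := by
  rw [nhds_pi]
  refine hasBasis_pi_same_index (fun i => Metric.nhds_basis_ball) fun F r hF hr => ?_
  have hle : ∀ᶠ ε in 𝓝[>] (0 : ℝ), ∀ i ∈ F, ε < r i :=
    (eventually_all_finite hF).2 fun i hi => nhdsWithin_le_nhds (eventually_lt_nhds (hr i hi))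
  obtain ⟨ε, hεr, hε⟩ := (hle.and self_mem_nhdsWithin).exists
  exact ⟨ε, hε, fun i hi => Metric.ball_subset_ball (hεr i hi).le⟩

variable {X : Type u} [TopologicalSpace X] {E : Type*} [PseudoMetricSpace E]

/-- The set of points at which `f` is `ε`-close to `g`. The argument `f` comes last so that
`closenessSet g ε '' A` is the family of sets attached to a set `A` of functions. -/
def closenessSet (g : C(X, E)) (ε : ℝ) (f : C(X, E)) : Set X :=
  {x | dist (f x) (g x) < ε}

lemma isOpen_closenessSet (g : C(X, E)) (ε : ℝ) (f : C(X, E)) : IsOpen (closenessSet g ε f) :=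
  isOpen_lt (by fun_prop) continuous_const

lemma closenessSet_mono (g f : C(X, E)) {δ ε : ℝ} (h : δ ≤ ε) :
    closenessSet g δ f ⊆ closenessSet g ε f :=
  fun _ hx => lt_of_lt_of_le hx h

lemma mem_closure_iff_isCofinalFor_closenessSet {A : Set C(X, E)} {g : C(X, E)} :
    g ∈ closure A ↔ ∀ ε > 0, IsCofinalFor {K | IsCompact K} (closenessSet g ε '' A) := by
  rw [mem_closure_iff_nhds_basis (nhds_basis_uniformity
    (Metric.uniformity_basis_dist.compactConvergenceUniformity (α := X) (β := E)))]
  simp only [Prod.forall, and_imp, IsCofinalFor, exists_mem_image]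
  exact ⟨fun h ε hε K hK => h K ε hK hε, fun h K ε hK hε => h ε hε hK⟩

lemma mem_closure_pointwiseTopology_iff {A : Set C(X, ℝ)} {g : C(X, ℝ)} :
    g ∈ closure[pointwiseTopology X] A ↔
      ∀ ε > 0, closenessSet g ε '' A ∈ omegaFamilies X := by
  rw [show g ∈ closure[pointwiseTopology X] A ↔
      (g : X → ℝ) ∈ closure ((fun f : C(X, ℝ) => (f : X → ℝ)) '' A) from closure_induced,
    mem_closure_iff_nhds_basis (nhds_pi_hasBasis_ball _)]
  simp only [Prod.forall, and_imp, omegaFamilies, IsCofinalFor, mem_ofPred_eq, exists_mem_image]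
  exact ⟨fun h ε hε F hF => h F ε hF hε, fun h F ε hF hε => h ε hε hF⟩

end Closure

section Tychonoff

variable {X : Type*} [TopologicalSpace X]

lemma exists_continuousMap_eqOn_one_zero [CompletelyRegularSpace X]
    {K U : Set X} (hK : IsCompact K) (hU : IsOpen U) (hKU : K ⊆ U) :
    ∃ h : C(X, ℝ), EqOn h 1 K ∧ EqOn h 0 Uᶜ := by
  obtain ⟨V, hV, rfl⟩ := (isInducing_stoneCechUnit (X := X)).isOpen_iff.1 hU
  have hK' : IsClosed (stoneCechUnit '' K) := (hK.image continuous_stoneCechUnit).isClosed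
  obtain ⟨f, hf0, hf1, -⟩ := exists_continuous_zero_one_of_isClosed hV.isClosed_compl hK'
    (disjoint_compl_left_iff_subset.2 (image_subset_iff.2 hKU))
  exact ⟨f.comp ⟨stoneCechUnit, continuous_stoneCechUnit⟩,
    fun x hx => hf1 (mem_image_of_mem _ hx), fun x hx => hf0 hx⟩

lemma exists_continuousMap_eqOn_of_finite [T35Space X] {F : Set X} (hF : F.Finite) (u : X → ℝ) :
    ∃ h : C(X, ℝ), EqOn h u F := by
  have : Finite F := hF
  have hemb : IsClosedEmbedding fun x : F => stoneCechUnit (x : X) :=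
    (continuous_stoneCechUnit.comp continuous_subtype_val).isClosedEmbedding
      (injective_stoneCechUnit_of_t35Space.comp Subtype.val_injective)
  obtain ⟨h, hh⟩ :=
    ContinuousMap.exists_extension' hemb ⟨F.domRestrict u, continuous_of_discreteTopology⟩
  exact ⟨h.comp ⟨stoneCechUnit, continuous_stoneCechUnit⟩, fun x hx => congrFun hh ⟨x, hx⟩⟩

end Tychonoff

section Separability

variable {X : Type u} [TopologicalSpace X]

lemma denseRange_comp_pointwiseTopology {Z : Type*} [TopologicalSpace Z] [T35Space Z]
    {φ : C(X, Z)} (hφ : Function.Injective φ) :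
    @DenseRange _ (pointwiseTopology X) _ fun h : C(Z, ℝ) => h.comp φ := by
  refine fun g => mem_closure_pointwiseTopology_iff.2 fun ε hε F hF => ?_
  obtain ⟨h, hh⟩ :=
    exists_continuousMap_eqOn_of_finite (hF.image φ) (Function.extend φ g 0)
  have hhg : ∀ x ∈ F, h (φ x) = g x := fun x hx =>
    (hh (mem_image_of_mem φ hx)).trans (hφ.extend_apply g 0 x)
  refine ⟨_, mem_image_of_mem _ (mem_range_self h), fun x hx => ?_⟩
  simpa [closenessSet, hhg x hx] using hε

lemma continuous_comp_pointwiseTopology {Z : Type*} [TopologicalSpace Z] (φ : C(X, Z)) :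
    Continuous[_, pointwiseTopology X] fun h : C(Z, ℝ) => h.comp φ :=
  continuous_induced_rng.2 (continuous_coeFun.comp φ.continuous_precomp)

lemma CountableIWeight.exists_injective_continuousMap_hilbertCube (hiw : CountableIWeight X) :
    ∃ φ : C(X, ℕ → I), Function.Injective φ := by
  obtain ⟨Y, _, _, _, p, hp, hpb⟩ := hiw
  let := metrizableSpaceMetric Y
  obtain ⟨e, he⟩ := Metric.PiNatEmbed.exists_embedding_to_hilbert_cube (X := Y)
  exact ⟨⟨e ∘ p, he.continuous.comp hp⟩, he.injective.comp hpb.injective⟩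

theorem CountableIWeight.separableSpace_pointwiseTopology (hiw : CountableIWeight X) :
    @SeparableSpace C(X, ℝ) (pointwiseTopology X) := by
  obtain ⟨φ, hφ⟩ := hiw.exists_injective_continuousMap_hilbertCube
  exact @DenseRange.separableSpace _ _ _ _ (pointwiseTopology X) _
    (denseRange_comp_pointwiseTopology hφ) (continuous_comp_pointwiseTopology φ)

end Separability

section FunctionSpaces

variable {X : Type u} [TopologicalSpace X]

lemma dense_setOf_eqOn_compl [CompletelyRegularSpace X] {𝒰 : Set (Set X)}
    (h𝒰 : 𝒰 ∈ openKFamilies X) (c : C(X, ℝ)) :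
    Dense {f : C(X, ℝ) | ∃ U ∈ 𝒰, EqOn f c Uᶜ} := by
  refine fun g => mem_closure_iff_isCofinalFor_closenessSet.2 fun ε hε K hK => ?_
  obtain ⟨U, hU, hKU⟩ := h𝒰.2 hK
  obtain ⟨h, h1, h0⟩ := exists_continuousMap_eqOn_one_zero hK (h𝒰.1 U hU) hKU
  have hmem : c + h * (g - c) ∈ {f : C(X, ℝ) | ∃ U ∈ 𝒰, EqOn f c Uᶜ} :=
    ⟨U, hU, fun x hx => by simp [h0 hx]⟩
  refine ⟨_, mem_image_of_mem _ hmem, fun x hx => ?_⟩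
  simpa [closenessSet, h1 hx] using hε

theorem sfinSel_openKFamilies_omegaFamilies_of_dense [CompletelyRegularSpace X]
    (h : SfinSel {D : Set C(X, ℝ) | Dense D}
      {D : Set C(X, ℝ) | @Dense _ (pointwiseTopology X) D}) :
    SfinSel (openKFamilies X) (omegaFamilies X) := by
  refine h.of_rel (fun f U => EqOn (f : C(X, ℝ)) (1 : C(X, ℝ)) Uᶜ)
    (fun 𝒰 h𝒰 => dense_setOf_eqOn_compl h𝒰 1) fun B hB 𝒱 h𝒱 F hF => ?_
  obtain ⟨_, ⟨f, hf, rfl⟩, hFf⟩ :=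
    mem_closure_pointwiseTopology_iff.1 (hB 0) 1 one_pos hF
  obtain ⟨U, hU, hfU⟩ := h𝒱 f hf
  refine ⟨U, hU, fun x hx => by_contra fun hxU => ?_⟩
  simpa [closenessSet, hfU hxU] using hFf hx

theorem SfinSel.mem_closure_pointwiseTopology (h : SfinSel (openKFamilies X) (omegaFamilies X))
    (g : C(X, ℝ)) :
    SfinSel {A | g ∈ closure A} {A | g ∈ closure[pointwiseTopology X] A} := by
  let ℬ (m : ℕ) : Set (Set C(X, ℝ)) :=
    {A | closenessSet g (1 / (m + 1)) '' A ∈ omegaFamilies X}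
  have hupper (m : ℕ) : IsUpperSet (ℬ m) :=
    fun _ _ hle hA => isUpperSet_omegaFamilies X (image_mono hle) hA
  have hℬ (m : ℕ) : SfinSel {A | g ∈ closure A} (ℬ m) := by
    refine h.of_rel (fun U f => closenessSet g (1 / (m + 1)) f = U) (fun A hA => ⟨?_, ?_⟩)
      fun 𝒰 h𝒰 D hD => isUpperSet_omegaFamilies X hD h𝒰
    · rintro _ ⟨f, -, rfl⟩
      exact isOpen_closenessSet g _ f
    · exact mem_closure_iff_isCofinalFor_closenessSet.1 hA _ Nat.one_div_pos_of_nat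
  refine (SfinSel.iInter hupper hℬ).mono Subset.rfl fun A hA => ?_
  refine mem_closure_pointwiseTopology_iff.2 fun ε hε F hF => ?_
  obtain ⟨m, hm⟩ := exists_nat_one_div_lt hε
  obtain ⟨_, ⟨f, hf, rfl⟩, hFf⟩ := mem_iInter.1 hA m hF
  exact ⟨_, mem_image_of_mem _ hf, hFf.trans (closenessSet_mono g f hm.le)⟩

end FunctionSpaces

theorem statement10 (X : Type u) [TopologicalSpace X] [T35Space X]
    (hiw : CountableIWeight X) :
    SfinSel {D : Set C(X, ℝ) | Dense D}
      {D : Set C(X, ℝ) | @Dense _ (pointwiseTopology X) D} ↔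
    SfinSel {𝒰 : Set (Set X) | IsKCover 𝒰} {𝒰 : Set (Set X) | IsOmegaCover 𝒰} := by
  rw [sfinSel_isKCover_isOmegaCover_iff]
  refine ⟨sfinSel_openKFamilies_omegaFamilies_of_dense, fun h => ?_⟩
  refine @SfinSel.dense_of_forall_mem_closure _ _ (pointwiseTopology X)
    hiw.separableSpace_pointwiseTopology fun g => ?_
  exact (h.mem_closure_pointwiseTopology g).mono (fun D hD => hD g) Subset.rfl
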